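/- Let f be a homogeneous polynomial of degree d in n variables with f_min = min_{x ∈ Δ_{n−1}} f(x) and f_max = max_{x ∈ Δ_{n−1}} f(x), and let f_LP^(r+d) be the value of the level-(r+d) LP relaxation of min_{x ∈ Δ_{n−1}} f(x). Then for r + d > d(d−1)/2 + 1, f_min − f_LP^(r+d) ≤ [ d(d−1) / ( 2(r+d−1) − d(d−1) ) ] · C(2d−1, d) · d^d · ( f_max − f_min ), where C(2d−1,d) is the binomial coefficient. -/

import Mathlib

open MvPolynomial

/-!
Write `f = ∑_w A_w x_{w 1} ⋯ x_{w d}` with a symmetric tensor `A` and put `N = r + d`. A feasible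
functional `L` defines a probability distribution on words `W` of length `N`, in which `W` has
weight `L (x_{W 1} ⋯ x_{W N})`. Since `L` does not see multiplication by `x_1 + ⋯ + x_n` up to
degree `N`, drawing `d` positions of a random word without replacement and averaging `A` over the
letters found there gives `L f`. Drawing with replacement instead gives the value of `f` at the
vector of letter frequencies of `W`, a point of the simplex, hence at least `f_min`. The two
averages differ only through the draws with a repeated position, a proportion
`1 - N (N - 1) ⋯ (N - d + 1) / N ^ d` of all draws, and each of these contributes at most `max A`.
Finally, `max A` is controlled by `f_max - f_min` through the polarization identity, whose terms
are again values of `f` at letter frequencies.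
-/

namespace SimplexLP

open Finset
open scoped Pointwise

section Counting

theorem sum_neg_one_pow_smul_sum_piFinset_compl {ι G : Type*} [Fintype ι] [DecidableEq ι]
    [AddCommGroup G] (F : (ι → ι) → G) :
    ∑ T : Finset ι, (-1 : ℤ) ^ #T • ∑ p ∈ Fintype.piFinset (fun _ : ι ↦ Tᶜ), F p =
      ∑ τ : Equiv.Perm ι, F τ := by
  let avoiding (i : ι) : Finset (ι → ι) := {p | ∀ j, p j ≠ i}
  have avoiding_inf (T : Finset ι) :
      T.inf avoiding = Fintype.piFinset (fun _ : ι ↦ Tᶜ) := by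
    ext p
    simp only [avoiding, mem_inf, mem_filter_univ, Fintype.mem_piFinset, mem_compl]
    grind
  have surjective_inf :
      (univ.inf fun i ↦ (avoiding i)ᶜ) = univ.filter Function.Bijective := by
    ext p
    rw [mem_filter_univ, ← Finite.surjective_iff_bijective]
    simp [avoiding, mem_inf, Function.Surjective]
  have inclusion_exclusion := inclusion_exclusion_sum_inf_compl univ avoiding F
  simp only [powerset_univ, avoiding_inf, surjective_inf] at inclusion_exclusion
  rw [← inclusion_exclusion]
  refine (sum_nbij (fun τ : Equiv.Perm ι ↦ (τ : ι → ι)) ?_ ?_ ?_ fun _ _ ↦ rfl).symm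
  · exact fun τ _ ↦ mem_filter_univ _ |>.2 τ.bijective
  · exact DFunLike.coe_injective.injOn
  · exact fun p hp ↦ ⟨.ofBijective p (mem_filter_univ _ |>.1 hp), mem_coe.2 (mem_univ _), rfl⟩

theorem sum_embedding_le_sum {ι κ M : Type*} [Fintype ι] [DecidableEq ι] [Fintype κ]
    [Fintype (ι ↪ κ)] [AddCommMonoid M] [PartialOrder M] [IsOrderedAddMonoid M]
    {g : (ι → κ) → M} (hg : 0 ≤ g) :
    ∑ e : ι ↪ κ, g e ≤ ∑ p, g p := by
  calc
    ∑ e : ι ↪ κ, g e = ∑ p ∈ univ.map ⟨_, DFunLike.coe_injective (F := ι ↪ κ)⟩, g p :=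
      (sum_map univ ⟨_, DFunLike.coe_injective⟩ g).symm
    _ ≤ ∑ p, g p := sum_le_univ_sum_of_nonneg hg

theorem two_pow_le_two_mul_factorial_mul_choose {d : ℕ} (hd : 0 < d) :
    2 ^ d ≤ 2 * (d.factorial * (2 * d - 1).choose d) := by
  rw [← Nat.descFactorial_eq_factorial_mul_choose]
  rcases (Nat.succ_le_iff.2 hd).eq_or_lt with rfl | hd
  · simp
  · calc
      2 ^ d ≤ d ^ d := Nat.pow_le_pow_left hd d
      _ = (2 * d - 1 + 1 - d) ^ d := by congr 1; omega
      _ ≤ (2 * d - 1).descFactorial d := Nat.pow_sub_le_descFactorial _ _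
      _ ≤ 2 * (2 * d - 1).descFactorial d := Nat.le_mul_of_pos_left _ two_pos

variable (R : Type*) [CommRing R] [LinearOrder R] [IsStrictOrderedRing R]

theorem natCast_mul_sub_one_nonneg (d : ℕ) : (0 : R) ≤ d * (d - 1) := by
  cases d with
  | zero => simp
  | succ d => push_cast; rw [add_sub_cancel_right]; positivity

theorem pow_mul_two_mul_sub_le_two_mul_descFactorial (N d : ℕ) :
    (N : R) ^ d * (2 * N - d * (d - 1)) ≤ 2 * N * N.descFactorial d := by
  induction d with
  | zero => simp
  | succ d ih =>
    rcases le_or_gt d N with hdN | hNd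
    · have ih_mul := mul_le_mul_of_nonneg_right ih (sub_nonneg.2 (Nat.cast_le (α := R).2 hdN))
      have cubic_nonneg := mul_nonneg (pow_nonneg N.cast_nonneg d)
        (mul_nonneg d.cast_nonneg (natCast_mul_sub_one_nonneg R d))
      rw [Nat.descFactorial_succ]
      push_cast [Nat.cast_sub hdN]
      rw [pow_succ]
      linarith
    · have N_lt_d : (N : R) + 1 ≤ d := by exact_mod_cast hNd
      rw [Nat.descFactorial_of_lt (by omega), Nat.cast_zero, mul_zero]
      have two_mul_N_le : 2 * (N : R) ≤ (d + 1) * d := by nlinarith [N.cast_nonneg (α := R)]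
      refine mul_nonpos_of_nonneg_of_nonpos (by positivity) ?_
      push_cast
      linarith

end Counting

section TensorForm

variable {σ ι κ : Type*} [Fintype σ] [Fintype ι] [DecidableEq ι] [Fintype κ] [DecidableEq κ]

section Algebra

variable {R : Type*} [CommSemiring R]

/-- The form `∑ w, A w • x^w` with coefficient tensor `A`, whose entries are indexed by the words
`w : ι → σ`. When `A` is symmetric, its entries are the Bernstein coefficients of this form. -/
noncomputable def tensorForm : ((ι → σ) → R) →ₗ[R] MvPolynomial σ R :=
  Fintype.linearCombination R fun w ↦ ∏ j, X (w j)

theorem tensorForm_apply (A : (ι → σ) → R) :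
    tensorForm A = ∑ w, A w • ∏ j, (X (w j) : MvPolynomial σ R) :=
  Fintype.linearCombination_apply ..

theorem eval_tensorForm (x : σ → R) (A : (ι → σ) → R) :
    eval x (tensorForm A) = ∑ w, A w * ∏ j, x (w j) := by
  simp [tensorForm_apply, smul_eval]

theorem tensorForm_comp_equiv (e : ι ≃ κ) (A : (ι → σ) → R) :
    tensorForm (fun W : κ → σ ↦ A (W ∘ e)) = tensorForm A := by
  simp only [tensorForm_apply]
  refine Fintype.sum_equiv (e.arrowCongr (.refl σ)).symm _ _ fun W ↦ ?_
  congr 1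
  exact (e.prod_comp fun k ↦ X (W k)).symm

theorem tensorForm_mul_tensorForm (A : (ι → σ) → R) (B : (κ → σ) → R) :
    tensorForm A * tensorForm B =
      tensorForm fun W : ι ⊕ κ → σ ↦ A (W ∘ Sum.inl) * B (W ∘ Sum.inr) := by
  simp only [tensorForm_apply, sum_mul_sum, ← Fintype.sum_prod_type']
  refine (Fintype.sum_equiv (Equiv.sumArrowEquivProdArrow ι κ σ) _ _ fun W ↦ ?_).symm
  rw [smul_mul_smul_comm, Fintype.prod_sum_type]
  rfl

theorem tensorForm_one :
    tensorForm (1 : (ι → σ) → R) = (∑ i, X i) ^ Fintype.card ι := by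
  rw [tensorForm_apply, ← card_univ, ← prod_const, Fintype.prod_sum]
  simp

theorem tensorForm_comp_embedding (e : ι ↪ κ) (A : (ι → σ) → R) :
    tensorForm (fun W : κ → σ ↦ A (W ∘ e)) =
      tensorForm A * (∑ i, X i) ^ (Fintype.card κ - Fintype.card ι) := by
  classical
  let e' : ι ⊕ ↥(Set.range e)ᶜ ≃ κ :=
    ((Equiv.ofInjective e e.injective).sumCongr (.refl _)).trans (Equiv.Set.sumCompl _)
  have card_compl : Fintype.card ↥(Set.range e)ᶜ = Fintype.card κ - Fintype.card ι := by
    rw [← Fintype.card_congr e', Fintype.card_sum, Nat.add_sub_cancel_left]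
  rw [← card_compl, ← tensorForm_one, tensorForm_mul_tensorForm, ← tensorForm_comp_equiv e']
  simp only [Pi.one_apply, mul_one]
  rfl

theorem exists_tensorForm_eq {d : ℕ} {f : MvPolynomial σ R} (hf : f.IsHomogeneous d) :
    ∃ A : (Fin d → σ) → R, tensorForm A = f := by
  have mem_span : f ∈ Submodule.span R (Set.range (X : σ → MvPolynomial σ R) ^ d) := by
    rwa [← Submodule.span_pow, ← homogeneousSubmodule_one_eq_span_X,
      homogeneousSubmodule_one_pow]
  have words : Set.range (X : σ → MvPolynomial σ R) ^ d =
      Set.range fun w : Fin d → σ ↦ ∏ j, X (w j) := by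
    ext q
    simp only [Set.mem_pow, List.prod_ofFn]
    constructor
    · rintro ⟨u, rfl⟩
      choose w hw using fun j ↦ (u j).2
      exact ⟨w, by simp only [hw]⟩
    · rintro ⟨w, rfl⟩
      exact ⟨fun j ↦ ⟨X (w j), w j, rfl⟩, rfl⟩
  rwa [words, ← Fintype.range_linearCombination R] at mem_span

end Algebra

theorem exists_symmetric_tensorForm_eq {𝕜 : Type*} [Field 𝕜] [CharZero 𝕜] {d : ℕ}
    {f : MvPolynomial σ 𝕜} (hf : f.IsHomogeneous d) :
    ∃ A : (Fin d → σ) → 𝕜, (∀ (τ : Equiv.Perm (Fin d)) w, A (w ∘ τ) = A w) ∧ tensorForm A = f := by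
  obtain ⟨A, rfl⟩ := exists_tensorForm_eq hf
  refine ⟨(d.factorial : 𝕜)⁻¹ • ∑ τ : Equiv.Perm (Fin d), fun w ↦ A (w ∘ τ), fun τ w ↦ ?_, ?_⟩
  · simp only [Pi.smul_apply, Finset.sum_apply]
    congr 1
    exact Equiv.sum_comp (Equiv.mulLeft τ) fun ρ : Equiv.Perm (Fin d) ↦ A (w ∘ ρ)
  · simp only [map_smul, map_sum, tensorForm_comp_equiv, sum_const, card_univ,
      Fintype.card_perm, Fintype.card_fin, ← Nat.cast_smul_eq_nsmul 𝕜]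
    exact inv_smul_smul₀ (Nat.cast_ne_zero.2 d.factorial_ne_zero) _

end TensorForm

section Sampling

variable {σ ι κ : Type*}

/-- The vector of relative frequencies of the letters of the word `W` at the positions in `S`;
it is the junk value `0` when `S` is empty. -/
noncomputable def letterFrequency [DecidableEq σ] (W : κ → σ) (S : Finset κ) (i : σ) : ℝ :=
  #{k ∈ S | W k = i} / #S

theorem letterFrequency_mem_stdSimplex [Fintype σ] [DecidableEq σ] (W : κ → σ) {S : Finset κ}
    (hS : S.Nonempty) : letterFrequency W S ∈ stdSimplex ℝ σ := by
  refine ⟨fun i ↦ by unfold letterFrequency; positivity, ?_⟩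
  have card_eq : #S = ∑ i, #{k ∈ S | W k = i} := card_eq_sum_card_fiberwise (by simp)
  simp only [letterFrequency, ← sum_div, ← Nat.cast_sum, ← card_eq]
  exact div_self (Nat.cast_ne_zero.2 hS.card_ne_zero)

variable [Fintype σ] [Fintype ι] [DecidableEq ι]

theorem sum_piFinset_comp [DecidableEq σ] (A : (ι → σ) → ℝ) (W : κ → σ) (S : Finset κ) :
    ∑ p ∈ Fintype.piFinset (fun _ : ι ↦ S), A (W ∘ p) =
      (#S : ℝ) ^ Fintype.card ι * eval (letterFrequency W S) (tensorForm A) := by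
  have scaled_frequency (i : σ) : #S * letterFrequency W S i = #{k ∈ S | W k = i} :=
    mul_div_cancel_of_imp' fun h ↦ by simp_all
  have card_fiber (u : ι → σ) :
      #{p ∈ Fintype.piFinset (fun _ : ι ↦ S) | W ∘ p = u} = ∏ j, #{k ∈ S | W k = u j} := by
    rw [← Fintype.card_piFinset]
    congr 1
    ext p
    simp [funext_iff, forall_and]
  rw [eval_tensorForm, mul_sum, ← sum_fiberwise _ (fun p ↦ W ∘ p)]
  refine sum_congr rfl fun u _ ↦ ?_
  rw [sum_congr rfl fun p hp ↦ congrArg A (mem_filter.1 hp).2, sum_const, card_fiber,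
    nsmul_eq_mul, mul_left_comm, ← card_univ, ← prod_const, ← prod_mul_distrib]
  simp only [scaled_frequency]
  push_cast
  ring

theorem sum_piFinset_comp_sub_mem_Icc [Fintype κ] [Nonempty ι] {A : (ι → σ) → ℝ} {m M : ℝ}
    (hA : ∀ x ∈ stdSimplex ℝ σ, eval x (tensorForm A) ∈ Set.Icc m M) (hmM : m ≤ M)
    (W : κ → σ) (S : Finset κ) :
    ∑ p ∈ Fintype.piFinset (fun _ : ι ↦ S), (A (W ∘ p) - m) ∈
      Set.Icc 0 ((Fintype.card κ : ℝ) ^ Fintype.card ι * (M - m)) := by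
  classical
  have sum_eq : ∑ p ∈ Fintype.piFinset (fun _ : ι ↦ S), (A (W ∘ p) - m) =
      (#S : ℝ) ^ Fintype.card ι * (eval (letterFrequency W S) (tensorForm A) - m) := by
    rw [sum_sub_distrib, sum_piFinset_comp, sum_const, Fintype.card_piFinset, prod_const, card_univ,
      nsmul_eq_mul, Nat.cast_pow, mul_sub]
  have M_sub_m_nonneg : 0 ≤ M - m := sub_nonneg.2 hmM
  rw [sum_eq]
  rcases S.eq_empty_or_nonempty with rfl | hS
  · simp only [card_empty, Nat.cast_zero, zero_pow Fintype.card_ne_zero, zero_mul]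
    exact ⟨le_rfl, mul_nonneg (by positivity) M_sub_m_nonneg⟩
  · obtain ⟨m_le, le_M⟩ := hA _ (letterFrequency_mem_stdSimplex W hS)
    refine ⟨mul_nonneg (by positivity) (sub_nonneg.2 m_le), ?_⟩
    gcongr
    exact card_le_univ S

theorem factorial_mul_apply_sub_le_of_symmetric [Nonempty ι] {A : (ι → σ) → ℝ} {m M : ℝ}
    (hsymm : ∀ (τ : Equiv.Perm ι) w, A (w ∘ τ) = A w)
    (hA : ∀ x ∈ stdSimplex ℝ σ, eval x (tensorForm A) ∈ Set.Icc m M) (hmM : m ≤ M)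
    (w : ι → σ) :
    (Fintype.card ι).factorial * (A w - m) ≤
      2 ^ Fintype.card ι / 2 * ((Fintype.card ι : ℝ) ^ Fintype.card ι * (M - m)) := by
  set B := (Fintype.card ι : ℝ) ^ Fintype.card ι * (M - m)
  have sum_sign : ∑ T : Finset ι, (-1 : ℝ) ^ #T = 0 := by
    exact_mod_cast sum_powerset_neg_one_pow_card_of_nonempty (univ_nonempty (α := ι))
  have polarization := sum_neg_one_pow_smul_sum_piFinset_compl fun p ↦ A (w ∘ p) - m
  simp only [hsymm, sum_const, card_univ, Fintype.card_perm, nsmul_eq_mul, zsmul_eq_mul,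
    Int.cast_pow, Int.cast_neg, Int.cast_one] at polarization
  rw [← polarization]
  -- Each inner sum lies in `[0, B]`, so only the sets `T` of even size contribute to the bound.
  calc
    _ ≤ ∑ T : Finset ι, (1 + (-1) ^ #T) / 2 * B := by
      refine sum_le_sum fun T _ ↦ ?_
      obtain ⟨nonneg, le_B⟩ := sum_piFinset_comp_sub_mem_Icc hA hmM w Tᶜ
      rcases neg_one_pow_eq_or ℝ #T with h | h <;> rw [h] <;> linarith
    _ = 2 ^ Fintype.card ι / 2 * B := by
      rw [← sum_mul, ← sum_div, sum_add_distrib, sum_sign]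
      simp

theorem apply_le_of_symmetric [Nonempty σ] {A : (ι → σ) → ℝ} {m M : ℝ}
    (hsymm : ∀ (τ : Equiv.Perm ι) w, A (w ∘ τ) = A w)
    (hA : ∀ x ∈ stdSimplex ℝ σ, eval x (tensorForm A) ∈ Set.Icc m M) (w : ι → σ) :
    A w ≤ m + (2 * Fintype.card ι - 1).choose (Fintype.card ι) *
      (Fintype.card ι : ℝ) ^ Fintype.card ι * (M - m) := by
  classical
  obtain ⟨m_le, le_M⟩ := hA _ (single_mem_stdSimplex ℝ (Classical.arbitrary σ))
  rcases isEmpty_or_nonempty ι with hι | hι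
  · simp_all [eval_tensorForm, Subsingleton.elim default w]
  · set d := Fintype.card ι
    have constant_le : (2 : ℝ) ^ d / 2 ≤ d.factorial * (2 * d - 1).choose d := by
      rw [div_le_iff₀' two_pos]
      exact_mod_cast two_pow_le_two_mul_factorial_mul_choose (Fintype.card_pos (α := ι))
    have M_sub_m_nonneg : 0 ≤ M - m := sub_nonneg.2 (m_le.trans le_M)
    rw [← sub_le_iff_le_add']
    refine le_of_mul_le_mul_left (a := (d.factorial : ℝ)) ?_ (by positivity)
    calc
      d.factorial * (A w - m) ≤ 2 ^ d / 2 * ((d : ℝ) ^ d * (M - m)) :=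
        factorial_mul_apply_sub_le_of_symmetric hsymm hA (m_le.trans le_M) w
      _ ≤ d.factorial * (2 * d - 1).choose d * ((d : ℝ) ^ d * (M - m)) := by gcongr
      _ = _ := by ring

theorem le_sum_embedding_comp [Fintype κ] [Nonempty κ] [Fintype (ι ↪ κ)]
    {A : (ι → σ) → ℝ} {m a : ℝ}
    (hm : ∀ x ∈ stdSimplex ℝ σ, m ≤ eval x (tensorForm A)) (ha : ∀ w, A w ≤ a) (W : κ → σ) :
    (Fintype.card κ : ℝ) ^ Fintype.card ι * m -
        ((Fintype.card κ : ℝ) ^ Fintype.card ι - (Fintype.card κ).descFactorial (Fintype.card ι)) *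
          a ≤
      ∑ e : ι ↪ κ, A (W ∘ e) := by
  classical
  have with_replacement :
      (Fintype.card κ : ℝ) ^ Fintype.card ι * m ≤ ∑ p : ι → κ, A (W ∘ p) := by
    rw [← Fintype.piFinset_univ, sum_piFinset_comp, card_univ]
    gcongr
    exact hm _ (letterFrequency_mem_stdSimplex W univ_nonempty)
  have without_replacement :=
    sum_embedding_le_sum (g := fun p : ι → κ ↦ a - A (W ∘ p)) fun p ↦ sub_nonneg.2 (ha _)
  simp only [sum_sub_distrib, sum_const, card_univ, Fintype.card_embedding_eq, Fintype.card_fun,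
    nsmul_eq_mul, Nat.cast_pow] at without_replacement
  linarith

end Sampling

section Relaxation

theorem prod_X_eq_monomial {σ ι R : Type*} [Fintype ι] [CommSemiring R] (w : ι → σ) :
    ∏ j, (X (w j) : MvPolynomial σ R) = monomial (∑ j, Finsupp.single (w j) 1) 1 :=
  (monomial_sum_one univ fun j ↦ Finsupp.single (w j) 1).symm

variable {σ : Type*} [Fintype σ]

/-- Feasibility of `L` for the level-`N` LP relaxation. The functional lives on all polynomials, but
only its values in degree at most `N` are constrained. -/
structure IsLPFeasible (N : ℕ) (L : MvPolynomial σ ℝ →ₗ[ℝ] ℝ) : Prop where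
  map_one : L 1 = 1
  map_monomial_nonneg : ∀ α : σ →₀ ℕ, α.degree ≤ N → 0 ≤ L (monomial α 1)
  map_mul_sum_X : ∀ α : σ →₀ ℕ, α.degree + 1 ≤ N →
    L (monomial α 1 * ∑ i, X i) = L (monomial α 1)

/-- The optimal value of the level-`N` LP relaxation of minimizing `f` over the simplex, written
`f_LP^(N)` in the literature. -/
noncomputable def lpValue (N : ℕ) (f : MvPolynomial σ ℝ) : ℝ :=
  sInf ((fun L ↦ L f) '' {L : MvPolynomial σ ℝ →ₗ[ℝ] ℝ | IsLPFeasible N L})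

theorem isLPFeasible_eval {x : σ → ℝ} (hx : x ∈ stdSimplex ℝ σ) (N : ℕ) :
    IsLPFeasible N (aeval x).toLinearMap where
  map_one := by simp
  map_monomial_nonneg α _ := by
    simpa [aeval_monomial] using prod_nonneg fun i _ ↦ pow_nonneg (hx.1 i) _
  map_mul_sum_X α _ := by simp [hx.2]

namespace IsLPFeasible

variable {ι κ : Type*} [Fintype ι] [DecidableEq ι] [Fintype κ]
  {N : ℕ} {L : MvPolynomial σ ℝ →ₗ[ℝ] ℝ}

theorem map_mul_sum_X_pow (hL : IsLPFeasible N L) {k : ℕ} {α : σ →₀ ℕ}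
    (hα : α.degree + k ≤ N) : L (monomial α 1 * (∑ i, X i) ^ k) = L (monomial α 1) := by
  induction k generalizing α with
  | zero => simp
  | succ k ih =>
    rw [← hL.map_mul_sum_X α (by omega), pow_succ', ← mul_assoc, mul_sum, sum_mul,
      map_sum, map_sum]
    refine sum_congr rfl fun i _ ↦ ?_
    rw [X, monomial_mul, one_mul]
    exact ih (by rw [map_add, Finsupp.degree_single]; omega)

theorem map_prod_X_nonneg (hL : IsLPFeasible (Fintype.card κ) L) (W : κ → σ) :
    0 ≤ L (∏ k, X (W k)) := by
  rw [prod_X_eq_monomial]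
  exact hL.map_monomial_nonneg _ (by simp)

theorem map_tensorForm [DecidableEq κ] (hL : IsLPFeasible (Fintype.card κ) L) (e : ι ↪ κ)
    (A : (ι → σ) → ℝ) :
    L (tensorForm A) = ∑ W : κ → σ, A (W ∘ e) * L (∏ k, X (W k)) := by
  have lifted : L (tensorForm A * (∑ i, X i) ^ (Fintype.card κ - Fintype.card ι)) =
      L (tensorForm A) := by
    have card_le := Fintype.card_le_of_embedding e
    simp only [tensorForm_apply, sum_mul, map_sum, smul_mul_assoc, map_smul]
    refine sum_congr rfl fun w _ ↦ ?_
    rw [prod_X_eq_monomial, hL.map_mul_sum_X_pow (by simp [Nat.add_sub_cancel' card_le])]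
  rw [← lifted, ← tensorForm_comp_embedding e]
  simp [tensorForm_apply]

theorem sum_map_prod_X [DecidableEq κ] (hL : IsLPFeasible (Fintype.card κ) L) :
    ∑ W : κ → σ, L (∏ k, X (W k)) = 1 := by
  simpa [tensorForm_one, hL.map_one] using
    (hL.map_tensorForm (.ofIsEmpty : Fin 0 ↪ κ) 1).symm

theorem le_descFactorial_mul_map_tensorForm [Nonempty κ] (hL : IsLPFeasible (Fintype.card κ) L)
    {A : (ι → σ) → ℝ} {m a : ℝ}
    (hm : ∀ x ∈ stdSimplex ℝ σ, m ≤ eval x (tensorForm A)) (ha : ∀ w, A w ≤ a) :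
    (Fintype.card κ : ℝ) ^ Fintype.card ι * m -
        ((Fintype.card κ : ℝ) ^ Fintype.card ι - (Fintype.card κ).descFactorial (Fintype.card ι)) *
          a ≤
      (Fintype.card κ).descFactorial (Fintype.card ι) * L (tensorForm A) := by
  classical
  calc
    _ = ∑ W : κ → σ, _ * L (∏ k, X (W k)) := by rw [← mul_sum, hL.sum_map_prod_X, mul_one]
    _ ≤ ∑ W : κ → σ, (∑ e : ι ↪ κ, A (W ∘ e)) * L (∏ k, X (W k)) :=
      sum_le_sum fun W _ ↦
        mul_le_mul_of_nonneg_right (le_sum_embedding_comp hm ha W) (hL.map_prod_X_nonneg W)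
    _ = ∑ e : ι ↪ κ, ∑ W : κ → σ, A (W ∘ e) * L (∏ k, X (W k)) := by
      simp only [sum_mul]
      exact sum_comm
    _ = ∑ _e : ι ↪ κ, L (tensorForm A) :=
      sum_congr rfl fun e _ ↦ (hL.map_tensorForm e A).symm
    _ = _ := by rw [sum_const, card_univ, Fintype.card_embedding_eq, nsmul_eq_mul]

theorem sub_map_tensorForm_le {d : ℕ} (hL : IsLPFeasible N L)
    (hN : (d : ℝ) * (d - 1) < 2 * N) {A : (Fin d → σ) → ℝ} {m a : ℝ}
    (hm : ∀ x ∈ stdSimplex ℝ σ, m ≤ eval x (tensorForm A)) (ha : ∀ w, A w ≤ a) (hma : m ≤ a) :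
    m - L (tensorForm A) ≤ d * (d - 1) / (2 * N - d * (d - 1)) * (a - m) := by
  have N_pos : (0 : ℝ) < N := by linarith [natCast_mul_sub_one_nonneg ℝ d]
  have : NeZero N := ⟨Nat.cast_ne_zero.1 N_pos.ne'⟩
  have gap_pos : (0 : ℝ) < 2 * N - d * (d - 1) := sub_pos.2 hN
  have descFactorial_bound := pow_mul_two_mul_sub_le_two_mul_descFactorial ℝ N d
  have descFactorial_pos : (0 : ℝ) < N.descFactorial d :=
    pos_of_mul_pos_right ((mul_pos (pow_pos N_pos d) gap_pos).trans_le descFactorial_bound)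
      (by positivity)
  have sampling_bound : (N : ℝ) ^ d * m - ((N : ℝ) ^ d - N.descFactorial d) * a ≤
      N.descFactorial d * L (tensorForm A) := by
    have hL' : IsLPFeasible (Fintype.card (Fin N)) L := by rwa [Fintype.card_fin]
    simpa only [Fintype.card_fin] using hL'.le_descFactorial_mul_map_tensorForm hm ha
  rw [div_mul_eq_mul_div, le_div_iff₀ gap_pos]
  refine le_of_mul_le_mul_left (a := (N.descFactorial d : ℝ)) ?_ descFactorial_pos
  calc
    N.descFactorial d * ((m - L (tensorForm A)) * (2 * N - d * (d - 1)))
      = N.descFactorial d * (m - L (tensorForm A)) * (2 * N - d * (d - 1)) := by ring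
    _ ≤ ((N : ℝ) ^ d - N.descFactorial d) * (a - m) * (2 * N - d * (d - 1)) :=
      mul_le_mul_of_nonneg_right (by linarith) gap_pos.le
    _ = ((N : ℝ) ^ d * (2 * N - d * (d - 1)) - N.descFactorial d * (2 * N - d * (d - 1))) *
          (a - m) := by ring
    _ ≤ (2 * N * N.descFactorial d - N.descFactorial d * (2 * N - d * (d - 1))) * (a - m) := by
      gcongr
    _ = N.descFactorial d * (d * (d - 1) * (a - m)) := by ring

theorem sub_map_le [Nonempty σ] {d : ℕ} {f : MvPolynomial σ ℝ} {m M : ℝ}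
    (hL : IsLPFeasible N L) (hf : f.IsHomogeneous d) (hN : (d : ℝ) * (d - 1) < 2 * N)
    (hfmM : ∀ x ∈ stdSimplex ℝ σ, eval x f ∈ Set.Icc m M) :
    m - L f ≤ d * (d - 1) / (2 * N - d * (d - 1)) *
      ((2 * d - 1).choose d * (d : ℝ) ^ d * (M - m)) := by
  classical
  obtain ⟨A, hsymm, rfl⟩ := exists_symmetric_tensorForm_eq hf
  obtain ⟨m_le, le_M⟩ := hfmM _ (single_mem_stdSimplex ℝ (Classical.arbitrary σ))
  have coeff_le := apply_le_of_symmetric hsymm hfmM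
  simp only [Fintype.card_fin] at coeff_le
  have bound_nonneg : 0 ≤ (2 * d - 1).choose d * (d : ℝ) ^ d * (M - m) :=
    mul_nonneg (by positivity) (sub_nonneg.2 (m_le.trans le_M))
  simpa using hL.sub_map_tensorForm_le hN (fun x hx ↦ (hfmM x hx).1) coeff_le
    (le_add_of_nonneg_right bound_nonneg)

end IsLPFeasible

theorem eval_mem_Icc_sInf_sSup (f : MvPolynomial σ ℝ) {x : σ → ℝ} (hx : x ∈ stdSimplex ℝ σ) :
    eval x f ∈ Set.Icc (sInf ((fun x ↦ eval x f) '' stdSimplex ℝ σ))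
      (sSup ((fun x ↦ eval x f) '' stdSimplex ℝ σ)) := by
  have compact_image := (isCompact_stdSimplex ℝ σ).image (continuous_eval f)
  have mem_image := Set.mem_image_of_mem (fun x ↦ eval x f) hx
  exact ⟨csInf_le compact_image.bddBelow mem_image, le_csSup compact_image.bddAbove mem_image⟩

theorem lpValue_eq_sInf_image_fun (N : ℕ) (f : MvPolynomial σ ℝ) :
    lpValue N f = sInf ((fun L ↦ L f) '' {L : MvPolynomial σ ℝ → ℝ |
      (∀ q q', L (q + q') = L q + L q') ∧ (∀ (c : ℝ) q, L (c • q) = c * L q) ∧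
      L 1 = 1 ∧
      (∀ α : σ →₀ ℕ, (∑ i, α i) ≤ N → 0 ≤ L (monomial α 1)) ∧
      (∀ α : σ →₀ ℕ, (∑ i, α i) + 1 ≤ N →
        L (monomial α 1) = L (monomial α 1 * ∑ i, X i))}) := by
  simp only [← Finsupp.degree_eq_sum]
  refine congrArg sInf (Set.ext fun y ↦ ⟨?_, ?_⟩)
  · rintro ⟨L, ⟨map_one, map_nonneg, map_mul⟩, rfl⟩
    exact ⟨L, ⟨map_add L, map_smul L, map_one, map_nonneg, fun α hα ↦ (map_mul α hα).symm⟩, rfl⟩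
  · rintro ⟨L, ⟨map_add, map_smul, map_one, map_nonneg, map_mul⟩, rfl⟩
    exact ⟨{ toFun := L, map_add' := map_add, map_smul' := map_smul },
      ⟨map_one, map_nonneg, fun α hα ↦ (map_mul α hα).symm⟩, rfl⟩

end Relaxation

end SimplexLP

open SimplexLP

theorem lp_relaxation_error_bound_simplex_general
    {σ : Type*} [Fintype σ] [Nonempty σ] {d N : ℕ} {f : MvPolynomial σ ℝ}
    (hf : f.IsHomogeneous d) (hN : (d : ℝ) * (d - 1) < 2 * N) :
    sInf ((fun x ↦ eval x f) '' stdSimplex ℝ σ) - lpValue N f ≤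
      d * (d - 1) / (2 * N - d * (d - 1)) * (2 * d - 1).choose d * (d : ℝ) ^ d *
        (sSup ((fun x ↦ eval x f) '' stdSimplex ℝ σ) -
          sInf ((fun x ↦ eval x f) '' stdSimplex ℝ σ)) := by
  classical
  rw [sub_le_comm]
  refine le_csInf (Set.Nonempty.image _
    ⟨_, isLPFeasible_eval (single_mem_stdSimplex ℝ (Classical.arbitrary σ)) N⟩) ?_
  rintro _ ⟨L, hL, rfl⟩
  rw [sub_le_comm]
  simpa only [mul_assoc] using hL.sub_map_le hf hN fun x hx ↦ eval_mem_Icc_sInf_sSup f hx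

/-- **Theorem (error bound for the LP relaxation of polynomial minimization over the
simplex).** For a homogeneous polynomial `f` of degree `d` with minimum `f_min` and
maximum `f_max` over the simplex, and `r + d > d(d-1)/2 + 1`,
`f_min - f_LP^(r+d) ≤ [d(d-1)/(2(r+d-1) - d(d-1))]·C(2d-1,d)·d^d·(f_max - f_min)`. -/
theorem lp_relaxation_error_bound_simplex
    {n d r : ℕ} (hn : 0 < n)
    (f : MvPolynomial (Fin n) ℝ) (hf : f.IsHomogeneous d)
    (Δ : Set (Fin n → ℝ)) (hΔ : Δ = {x : Fin n → ℝ | (∀ i, 0 ≤ x i) ∧ ∑ i, x i = 1})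
    (fmin fmax : ℝ)
    (hfmin : fmin = sInf ((fun x => eval x f) '' Δ))
    (hfmax : fmax = sSup ((fun x => eval x f) '' Δ))
    (fLP : ℝ)
    (hfLP : fLP = sInf ((fun L => L f) '' {L : MvPolynomial (Fin n) ℝ → ℝ |
      (∀ q q', L (q + q') = L q + L q') ∧ (∀ (c : ℝ) q, L (c • q) = c * L q) ∧
      L 1 = 1 ∧
      (∀ α : Fin n →₀ ℕ, (∑ i, α i) ≤ r + d → 0 ≤ L (monomial α 1)) ∧
      (∀ α : Fin n →₀ ℕ, (∑ i, α i) + 1 ≤ r + d →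
        L (monomial α 1) = L (monomial α 1 * ∑ i, X i))}))
    (hr : ((r : ℝ) + (d : ℝ)) > (d : ℝ) * ((d : ℝ) - 1) / 2 + 1) :
    fmin - fLP ≤
      ((d : ℝ) * ((d : ℝ) - 1) / (2 * ((r : ℝ) + (d : ℝ) - 1) - (d : ℝ) * ((d : ℝ) - 1)))
        * ((2 * d - 1).choose d : ℝ) * (d : ℝ) ^ d * (fmax - fmin) := by
  have : Nonempty (Fin n) := Fin.pos_iff_nonempty.1 hn
  obtain rfl : Δ = stdSimplex ℝ (Fin n) := hΔ
  have compact_image := (isCompact_stdSimplex ℝ (Fin n)).image (continuous_eval f)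
  have fmin_le_fmax : fmin ≤ fmax := by
    rw [hfmin, hfmax]
    exact Real.sInf_le_sSup _ compact_image.bddBelow compact_image.bddAbove
  have numerator_nonneg := natCast_mul_sub_one_nonneg ℝ d
  have general_bound := lp_relaxation_error_bound_simplex_general (N := r + d) hf
    (by push_cast; linarith)
  rw [lpValue_eq_sInf_image_fun, ← hfmin, ← hfmax, ← hfLP, Nat.cast_add] at general_bound
  refine general_bound.trans ?_
  gcongr <;> linarith
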